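/- arXiv:2305.06563 — 2 statements merged into one kernel-verified Lean document; each statement's English description precedes it below -/
import Mathlib

section
/- Let E be a real inner product space, let F₁ : E → ℝ be convex and differentiable with gradient ∇F₁ that is Lipschitz continuous with constant L > 0, let F₂ : E → ℝ be convex, and let x̃ ∈ E. Suppose x⁺ ∈ E is a global minimizer over E of the prox-linear surrogate u ↦ ⟨∇F₁(x̃), u − x̃⟩ + (L/2)‖u − x̃‖² + F₂(u). Then for every x ∈ E: (F₁(x) + F₂(x)) − (F₁(x⁺) + F₂(x⁺)) ≥ (L/2)‖x⁺ − x̃‖² + L·⟨x̃ − x, x⁺ − x̃⟩. -/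
/-!
Three inequalities add up to the claim. With `d = x⁺ - x̃`:

* the descent lemma `F₁ x⁺ ≤ F₁ x̃ + ⟪∇F₁ x̃, d⟫ + (L/2)‖d‖²` (from the Lipschitz gradient);
* the tangent inequality `F₁ x ≥ F₁ x̃ + ⟪∇F₁ x̃, x - x̃⟫` (from convexity of `F₁`);
* the optimality condition `F₂ x - F₂ x⁺ ≥ -⟪∇F₁ x̃ + L d, x - x⁺⟫`, i.e. that
  `-(∇F₁ x̃ + L d)` is a subgradient of `F₂` at `x⁺`, obtained by comparing `x⁺` with
  the points `x⁺ + t (x - x⁺)` for small `t > 0`.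
-/

open scoped RealInnerProductSpace

section

variable {E : Type*} [NormedAddCommGroup E] [InnerProductSpace ℝ E]

lemma hasDerivAt_along_line {F : E → ℝ} {f' : E → E}
    (hF : ∀ x : E, HasFDerivAt F (innerSL ℝ (f' x)) x) (a d : E) (t : ℝ) :
    HasDerivAt (fun s : ℝ => F (a + s • d)) ⟪f' (a + t • d), d⟫ t := by
  have hline : HasDerivAt (fun s : ℝ => a + s • d) d t := by
    simpa using ((hasDerivAt_id t).smul_const d).const_add a
  exact (hF (a + t • d)).comp_hasDerivAt t hline

/-- The descent lemma: along the segment, `F (a + t d)` minus its quadratic upper model has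
nonpositive derivative. -/
lemma descent_lemma {F : E → ℝ} {f' : E → E} {L : ℝ}
    (hF : ∀ x : E, HasFDerivAt F (innerSL ℝ (f' x)) x)
    (hLip : ∀ x y : E, ‖f' x - f' y‖ ≤ L * ‖x - y‖) (a d : E) :
    F (a + d) ≤ F a + ⟪f' a, d⟫ + L / 2 * ‖d‖ ^ 2 := by
  have hder : ∀ t : ℝ, HasDerivAt
      (fun s : ℝ => F (a + s • d) - s * ⟪f' a, d⟫ - s ^ 2 * (L / 2 * ‖d‖ ^ 2))
      (⟪f' (a + t • d), d⟫ - ⟪f' a, d⟫ - 2 * t * (L / 2 * ‖d‖ ^ 2)) t := by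
    intro t
    have h₁ : HasDerivAt (fun s : ℝ => s * ⟪f' a, d⟫) ⟪f' a, d⟫ t := by
      simpa using (hasDerivAt_id t).mul_const ⟪f' a, d⟫
    have h₂ : HasDerivAt (fun s : ℝ => s ^ 2 * (L / 2 * ‖d‖ ^ 2))
        (2 * t * (L / 2 * ‖d‖ ^ 2)) t := by
      simpa using (hasDerivAt_pow 2 t).mul_const (L / 2 * ‖d‖ ^ 2)
    exact ((hasDerivAt_along_line hF a d t).sub h₁).sub h₂
  have hanti := antitoneOn_of_deriv_nonpos (convex_Icc (0 : ℝ) 1)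
    (fun t _ => (hder t).continuousAt.continuousWithinAt)
    (fun t _ => (hder t).differentiableAt.differentiableWithinAt)
    (by
      intro t ht
      rw [interior_Icc] at ht
      rw [(hder t).deriv, ← inner_sub_left]
      have hcs := real_inner_le_norm (f' (a + t • d) - f' a) d
      have hl := hLip (a + t • d) a
      rw [add_sub_cancel_left, norm_smul, Real.norm_of_nonneg ht.1.le] at hl
      nlinarith [mul_le_mul_of_nonneg_right hl (norm_nonneg d)])
  have h := hanti (Set.left_mem_Icc.2 zero_le_one) (Set.right_mem_Icc.2 zero_le_one) zero_le_one
  simp only [one_smul, zero_smul, add_zero] at h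
  linarith

lemma tangent_le_of_convexOn {F : E → ℝ} {f' : E → E}
    (hF : ∀ x : E, HasFDerivAt F (innerSL ℝ (f' x)) x)
    (hconv : ConvexOn ℝ Set.univ F) (a d : E) :
    F a + ⟪f' a, d⟫ ≤ F (a + d) := by
  have hc : ConvexOn ℝ Set.univ (fun s : ℝ => F (a + s • d)) := by
    refine ⟨convex_univ, fun s _ t _ p q hp hq hpq => ?_⟩
    have h := hconv.2 (Set.mem_univ (a + s • d)) (Set.mem_univ (a + t • d)) hp hq hpq
    have heq : p • (a + s • d) + q • (a + t • d) = a + (p • s + q • t) • d := by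
      calc p • (a + s • d) + q • (a + t • d) = (p + q) • a + (p • s + q • t) • d := by
            simp only [smul_eq_mul]; module
        _ = _ := by rw [hpq, one_smul]
    rwa [heq] at h
  have h := hc.le_slope_of_hasDerivAt (Set.mem_univ 0) (Set.mem_univ 1) zero_lt_one
    (hasDerivAt_along_line hF a d 0)
  simp [slope_def_field] at h
  linarith

/-- First-order optimality for the minimizer `p` of `u ↦ ⟪g, u - a⟫ + (L/2)‖u - a‖² + G u`. -/
lemma prox_optimality {G : E → ℝ} {L : ℝ} (hL : 0 < L) (hG : ConvexOn ℝ Set.univ G)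
    (g a p : E)
    (hmin : ∀ u : E, ⟪g, p - a⟫ + (L / 2) * ‖p - a‖ ^ 2 + G p ≤
      ⟪g, u - a⟫ + (L / 2) * ‖u - a‖ ^ 2 + G u) (x : E) :
    0 ≤ ⟪g, x - p⟫ + L * ⟪p - a, x - p⟫ + (G x - G p) := by
  set A := ⟪g, x - p⟫ + L * ⟪p - a, x - p⟫ + (G x - G p) with hA
  set B := L / 2 * ‖x - p‖ ^ 2 with hB
  have hB0 : 0 ≤ B := by positivity
  have key : ∀ t : ℝ, 0 < t → t ≤ 1 → 0 ≤ A + t * B := by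
    intro t ht ht1
    have hm := hmin (p + t • (x - p))
    have hc := hG.2 (Set.mem_univ p) (Set.mem_univ x) (sub_nonneg.2 ht1) ht.le (by ring)
    have heq : (1 - t) • p + t • x = p + t • (x - p) := by module
    have heq' : p + t • (x - p) - a = (p - a) + t • (x - p) := by abel
    rw [heq, smul_eq_mul, smul_eq_mul] at hc
    rw [heq', norm_add_sq_real, inner_add_right, inner_smul_right, inner_smul_right,
      norm_smul, mul_pow, Real.norm_eq_abs, sq_abs] at hm
    have h : 0 ≤ t * (A + t * B) := by
      rw [hA, hB]
      linarith
    exact nonneg_of_mul_nonneg_right h ht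
  by_contra! hneg
  -- If `A < 0`, the step `t = A / (A - B)` in `(0, 1]` gives `A + t B = A² / (A - B) < 0`.
  have hAB : A - B < 0 := by linarith
  have h := key (A / (A - B)) (div_pos_of_neg_of_neg hneg hAB)
    ((div_le_one_of_neg hAB).2 (by linarith))
  have heq : A + A / (A - B) * B = A ^ 2 / (A - B) := by
    field_simp [hAB.ne]
    ring
  rw [heq] at h
  exact absurd h (not_le.2 (div_neg_of_pos_of_neg (sq_pos_of_neg hneg) hAB))

end

/-- Sufficient-decrease inequality for prox-linear updates: if `F₁` is
convex and differentiable with `L`-Lipschitz gradient `f'`, `F₂` is convex, and `x⁺`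
globally minimizes the prox-linear surrogate
`u ↦ ⟨f'(x̃), u − x̃⟩ + (L/2)‖u − x̃‖² + F₂(u)`, then for every `x`,
`(F₁ + F₂)(x) − (F₁ + F₂)(x⁺) ≥ (L/2)‖x⁺ − x̃‖² + L⟨x̃ − x, x⁺ − x̃⟩`. -/
theorem stmt16 {E : Type*} [NormedAddCommGroup E] [InnerProductSpace ℝ E]
    (F₁ F₂ : E → ℝ) (f' : E → E) (L : ℝ) (hL : 0 < L)
    (hF₁conv : ConvexOn ℝ Set.univ F₁)
    (hF₁diff : ∀ x : E, HasFDerivAt F₁ (innerSL ℝ (f' x)) x)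
    (hLip : ∀ x y : E, ‖f' x - f' y‖ ≤ L * ‖x - y‖)
    (hF₂conv : ConvexOn ℝ Set.univ F₂)
    (xt xp : E)
    (hmin : ∀ u : E,
      ⟪f' xt, xp - xt⟫ + (L / 2) * ‖xp - xt‖ ^ 2 + F₂ xp ≤
        ⟪f' xt, u - xt⟫ + (L / 2) * ‖u - xt‖ ^ 2 + F₂ u) :
    ∀ x : E, (F₁ x + F₂ x) - (F₁ xp + F₂ xp) ≥
      (L / 2) * ‖xp - xt‖ ^ 2 + L * ⟪xt - x, xp - xt⟫ := by
  intro x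
  have h₁ := descent_lemma hF₁diff hLip xt (xp - xt)
  have h₂ := tangent_le_of_convexOn hF₁diff hF₁conv xt (x - xt)
  have h₃ := prox_optimality hL hF₂conv (f' xt) xt xp hmin x
  rw [add_sub_cancel] at h₁ h₂
  have e₁ : ⟪f' xt, x - xp⟫ = ⟪f' xt, x - xt⟫ - ⟪f' xt, xp - xt⟫ := by
    rw [← inner_sub_right]
    congr 1
    abel
  have e₂ : ⟪xp - xt, x - xp⟫ = -⟪xt - x, xp - xt⟫ - ‖xp - xt‖ ^ 2 := by
    rw [← real_inner_self_eq_norm_sq, real_inner_comm, ← inner_neg_left, ← inner_sub_left]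
    congr 1
    abel
  rw [e₁, e₂] at h₃
  linarith
end

section
/- Define the real sequence (tᵏ)_{k≥0} by t⁰ = 1 and tᵏ = (0.8 + √(4(tᵏ⁻¹)² + 0.8))/2 for k ≥ 1, and define the extrapolation weights ωₖ = (tᵏ⁻¹ − 1)/tᵏ for k ≥ 1. Then for every k ≥ 1: tᵏ ≥ tᵏ⁻¹ + 2/5 (in particular the sequence (tᵏ) is strictly increasing and tᵏ ≥ 1 for all k), and 0 ≤ ωₖ < 1. -/
/-- For the step-size recursion `t⁰ = 1`,
`tᵏ = (0.8 + √(4(tᵏ⁻¹)² + 0.8))/2` and extrapolation weights `ωₖ = (tᵏ⁻¹ − 1)/tᵏ`: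
for every `k ≥ 1`, `tᵏ ≥ tᵏ⁻¹ + 2/5` (in particular `t` is strictly increasing and
`tᵏ ≥ 1` for all `k`), and `0 ≤ ωₖ < 1`. -/
theorem stmt18 (t : ℕ → ℝ) (ht0 : t 0 = 1)
    (htrec : ∀ k : ℕ, t (k + 1) = (0.8 + Real.sqrt (4 * t k ^ 2 + 0.8)) / 2)
    (ω : ℕ → ℝ) (hω : ∀ k : ℕ, 1 ≤ k → ω k = (t (k - 1) - 1) / t k) :
    (∀ k : ℕ, 1 ≤ k → t (k - 1) + 2 / 5 ≤ t k) ∧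
    StrictMono t ∧ (∀ k : ℕ, 1 ≤ t k) ∧
    (∀ k : ℕ, 1 ≤ k → 0 ≤ ω k ∧ ω k < 1) := by
  -- Dropping `0.8` under the root gives `√(4 t² + 0.8) ≥ 2 t`, hence the increment `0.8 / 2`.
  have step : ∀ k : ℕ, t k + 2 / 5 ≤ t (k + 1) := by
    intro k
    have h : 2 * t k ≤ Real.sqrt (4 * t k ^ 2 + 0.8) :=
      Real.le_sqrt_of_sq_le (by nlinarith)
    rw [htrec k]
    linarith
  have one_le : ∀ k : ℕ, 1 ≤ t k := by
    intro k
    induction k with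
    | zero => exact ht0.ge
    | succ k ih => linarith [step k]
  refine ⟨?_, strictMono_nat_of_lt_succ fun k => by linarith [step k], one_le, ?_⟩
  · intro k hk
    obtain ⟨n, rfl⟩ := Nat.exists_eq_add_of_le' hk
    exact step n
  · intro k hk
    obtain ⟨n, rfl⟩ := Nat.exists_eq_add_of_le' hk
    rw [hω _ hk, Nat.add_sub_cancel]
    have hpos : 0 < t (n + 1) := by linarith [one_le (n + 1)]
    exact ⟨div_nonneg (by linarith [one_le n]) hpos.le,
      (div_lt_one hpos).2 (by linarith [step n])⟩
end
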